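/- arXiv:2408.03428 — 2 statements merged into one kernel-verified Lean document; each statement's English description precedes it below -/
import Mathlib

section
/- Let σ>0, g>0, γ∈ℝ, and let c₁<0 be a real number satisfying c₁⁴=4σ(g+c₁γ). If c<0 and k<0 are real numbers satisfying the dispersion relation σk²+c²k+(g+cγ)=0, then c≤c₁. Moreover, if c=c₁, then necessarily k=−c₁²/(2σ). -/
/-! The dispersion relation is quadratic in `k`, so a real root forces its discriminant
`c ^ 4 - 4 * σ * (g + c * γ)` to be nonnegative. Dividing by `c < 0` isolates the vorticity: this
says that `c ^ 3 - 4 * σ * g / c` is at most `4 * σ * γ`, with equality at `c₁`. The left-hand side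
is strictly increasing on the negative half-line, whence `c ≤ c₁`; at `c = c₁` the discriminant
vanishes and `k` is the double root. -/

section

variable {K : Type*} [Field K]

theorem discrim_dispersion_eq_mul (σ g γ : K) {c : K} (hc : c ≠ 0) :
    discrim σ (c ^ 2) (g + c * γ) = -c * (4 * σ * γ - (c ^ 3 - 4 * σ * g / c)) := by
  rw [discrim]
  field_simp
  ring

variable [LinearOrder K] [IsStrictOrderedRing K]

theorem strictMonoOn_pow_sub_div_Iio {n : ℕ} (hn : Odd n) {b : K} (hb : 0 ≤ b) :
    StrictMonoOn (fun x : K ↦ x ^ n - b / x) (Set.Iio 0) := by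
  intro x (hx : x < 0) y (hy : y < 0) hxy
  have hpow : x ^ n < y ^ n := hn.strictMono_pow hxy
  have hinv : y⁻¹ ≤ x⁻¹ := (inv_le_inv_of_neg hy hx).mpr hxy.le
  have hdiv : b / y ≤ b / x := by
    simpa only [div_eq_mul_inv] using mul_le_mul_of_nonneg_left hinv hb
  linarith

theorem discrim_dispersion_nonneg_iff {σ g γ c c₁ : K} (hσg : 0 ≤ σ * g) (hc : c < 0)
    (hc₁ : c₁ < 0) (hcrit : discrim σ (c₁ ^ 2) (g + c₁ * γ) = 0) :
    0 ≤ discrim σ (c ^ 2) (g + c * γ) ↔ c ≤ c₁ := by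
  have hmono : StrictMonoOn (fun x : K ↦ x ^ 3 - 4 * σ * g / x) (Set.Iio 0) :=
    strictMonoOn_pow_sub_div_Iio (by decide) (by linarith)
  have hγ : c₁ ^ 3 - 4 * σ * g / c₁ = 4 * σ * γ := by
    rw [discrim_dispersion_eq_mul σ g γ hc₁.ne] at hcrit
    exact (sub_eq_zero.mp ((mul_eq_zero_iff_left (neg_ne_zero.mpr hc₁.ne)).mp hcrit)).symm
  rw [discrim_dispersion_eq_mul σ g γ hc.ne, mul_nonneg_iff_of_pos_left (neg_pos.mpr hc),
    sub_nonneg, ← hγ]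
  exact hmono.le_iff_le hc hc₁

theorem cPlus_global_max_general {σ g γ c₁ c k : K} (hσg : 0 ≤ σ * g) (hc₁ : c₁ < 0)
    (hcrit : c₁ ^ 4 = 4 * σ * (g + c₁ * γ)) (hc : c < 0)
    (hdisp : σ * k ^ 2 + c ^ 2 * k + (g + c * γ) = 0) :
    c ≤ c₁ ∧ (c = c₁ → k = -c₁ ^ 2 / (2 * σ)) := by
  have hdiscrim : discrim σ (c₁ ^ 2) (g + c₁ * γ) = 0 := by
    rw [discrim]
    linear_combination hcrit
  have hroot : σ * (k * k) + c ^ 2 * k + (g + c * γ) = 0 := by rwa [← sq k]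
  constructor
  · rw [← discrim_dispersion_nonneg_iff hσg hc hc₁ hdiscrim,
      discrim_eq_sq_of_quadratic_eq_zero hroot]
    exact sq_nonneg _
  · rintro rfl
    have hσ : σ ≠ 0 := by
      rintro rfl
      simp [hc.ne] at hcrit
    exact (quadratic_eq_zero_iff_of_discrim_eq_zero hσ hdiscrim k).mp hroot

end

/-- For σ>0, g>0, γ∈ℝ and c₁<0 with c₁⁴=4σ(g+c₁γ): if c<0 and k<0 satisfy the
dispersion relation σk²+c²k+(g+cγ)=0 then c ≤ c₁, with equality forcing k=−c₁²/(2σ). -/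
theorem cPlus_global_max (σ g γ c₁ : ℝ) (hσ : 0 < σ) (hg : 0 < g) (hc₁ : c₁ < 0)
    (hcrit : c₁ ^ 4 = 4 * σ * (g + c₁ * γ))
    (c k : ℝ) (hc : c < 0) (hk : k < 0)
    (hdisp : σ * k ^ 2 + c ^ 2 * k + (g + c * γ) = 0) :
    c ≤ c₁ ∧ (c = c₁ → k = -c₁ ^ 2 / (2 * σ)) :=
  cPlus_global_max_general (mul_pos hσ hg).le hc₁ hcrit hc hdisp
end

section
/- Let σ>0, g≥0, and let c, γ be real numbers with cγ>0 and c⁴=4σ(g+cγ). Set ω₀=c²/(2σ). Then (3σ/2)ω₀³ ≥ 3γ², and in particular (3σ/2)ω₀³ − γ² > 0. -/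
/-!
Put `a = g + c * γ`. Criticality reads `σ * ω₀ ^ 2 = a`, and `c ^ 2 = 2 * σ * ω₀`; eliminating `ω₀`
gives `(3 * σ / 2) * ω₀ ^ 3 = 3 * (a / c) ^ 2`. Since `γ = (c * γ) / c`, comparing this with
`3 * γ ^ 2` amounts to comparing `|a|` with `|c * γ|`, and `0 < c * γ ≤ a` for favorable vorticity.
-/

section Field

variable {K : Type*} [Field K] {σ c a : K}

/-- The absolute value `ω₀ = |ω|` of the critical frequency `ω = -c ^ 2 / (2 * σ)`, for surface
tension `σ > 0` and critical velocity `c`; it has the junk value `0` where `2 * σ = 0`. -/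
def criticalFrequency (σ c : K) : K := c ^ 2 / (2 * σ)

lemma two_mul_ne_zero_of_critical (hc : c ≠ 0) (hcrit : c ^ 4 = 4 * σ * a) : 2 * σ ≠ 0 := by
  intro h
  have hc4 : c ^ 4 = 0 := by linear_combination hcrit + 2 * a * h
  exact pow_ne_zero 4 hc hc4

lemma two_mul_mul_criticalFrequency (hσ : 2 * σ ≠ 0) :
    2 * σ * criticalFrequency σ c = c ^ 2 :=
  mul_div_cancel₀ (c ^ 2) hσ

lemma mul_criticalFrequency_sq (hc : c ≠ 0) (hcrit : c ^ 4 = 4 * σ * a) :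
    σ * criticalFrequency σ c ^ 2 = a := by
  have hσ : 2 * σ ≠ 0 := two_mul_ne_zero_of_critical hc hcrit
  have h2 : (2 : K) ≠ 0 := left_ne_zero_of_mul hσ
  refine mul_left_cancel₀ (mul_ne_zero h2 hσ) ?_
  calc 2 * (2 * σ) * (σ * criticalFrequency σ c ^ 2)
      = (2 * σ * criticalFrequency σ c) ^ 2 := by ring
    _ = c ^ 4 := by rw [two_mul_mul_criticalFrequency hσ, ← pow_mul]
    _ = 2 * (2 * σ) * a := by rw [hcrit]; ring

lemma mul_criticalFrequency_cube (hc : c ≠ 0) (hcrit : c ^ 4 = 4 * σ * a) :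
    σ * criticalFrequency σ c ^ 3 = 2 * (a / c) ^ 2 := by
  have hσ : 2 * σ ≠ 0 := two_mul_ne_zero_of_critical hc hcrit
  rw [div_pow, mul_div_assoc', eq_div_iff (pow_ne_zero 2 hc)]
  calc σ * criticalFrequency σ c ^ 3 * c ^ 2
      = σ * criticalFrequency σ c ^ 3 * (2 * σ * criticalFrequency σ c) := by
        rw [two_mul_mul_criticalFrequency hσ]
    _ = 2 * (σ * criticalFrequency σ c ^ 2) ^ 2 := by ring
    _ = 2 * a ^ 2 := by rw [mul_criticalFrequency_sq hc hcrit]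

end Field

theorem focusing_favorable_vorticity_general {K : Type*} [Field K] [LinearOrder K]
    [IsStrictOrderedRing K] {σ g c γ : K} (hc : c ≠ 0) (hγ : |c * γ| ≤ |g + c * γ|)
    (hcrit : c ^ 4 = 4 * σ * (g + c * γ)) :
    3 * γ ^ 2 ≤ (3 * σ / 2) * criticalFrequency σ c ^ 3 ∧
      0 < (3 * σ / 2) * criticalFrequency σ c ^ 3 - γ ^ 2 := by
  have h_coeff : (3 * σ / 2) * criticalFrequency σ c ^ 3 = 3 * ((g + c * γ) / c) ^ 2 := by
    linear_combination (3 / 2) * mul_criticalFrequency_cube hc hcrit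
  have h_le : γ ^ 2 ≤ ((g + c * γ) / c) ^ 2 := by
    rw [div_pow, le_div_iff₀ (by positivity), ← mul_pow, mul_comm γ c]
    exact sq_le_sq.mpr hγ
  have h_pos : 0 < ((g + c * γ) / c) ^ 2 := by
    have ha : g + c * γ ≠ 0 := right_ne_zero_of_mul (hcrit ▸ pow_ne_zero 4 hc)
    positivity
  rw [h_coeff]
  constructor <;> linarith

/-- For σ>0, g≥0 and c,γ with cγ>0 satisfying the criticality condition c⁴=4σ(g+cγ),
the quantity ω₀=c²/(2σ) satisfies (3σ/2)ω₀³ ≥ 3γ², hence (3σ/2)ω₀³ − γ² > 0. -/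
theorem focusing_favorable_vorticity (σ g c γ : ℝ) (hσ : 0 < σ) (hg : 0 ≤ g)
    (hcγ : 0 < c * γ) (hcrit : c ^ 4 = 4 * σ * (g + c * γ)) :
    3 * γ ^ 2 ≤ (3 * σ / 2) * (c ^ 2 / (2 * σ)) ^ 3 ∧
      0 < (3 * σ / 2) * (c ^ 2 / (2 * σ)) ^ 3 - γ ^ 2 :=
  focusing_favorable_vorticity_general (left_ne_zero_of_mul hcγ.ne')
    (abs_le_abs_of_nonneg hcγ.le (le_add_of_nonneg_left hg)) hcrit
end
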